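/- Let δ > 0 be sufficiently small, let φ₁, φ₂ ∈ X_δ, let η ∈ X, and let K ∈ C³(ℝ). Then the function x ↦ (K'(φ₂(x)) − K'(φ₁(x))) η(x) belongs to X, and there is a constant C > 0 depending only on δ and on the bounds of K', K'', K''' on [−δ, δ] such that ‖(K'(φ₂(·)) − K'(φ₁(·))) η(·)‖_X ≤ C ‖φ₁ − φ₂‖_X ‖η‖_X. -/

import Mathlib

noncomputable section

open MeasureTheory Metric Set Filter

/-- ℝ³ with the Euclidean norm. -/
abbrev E3 := EuclideanSpace ℝ (Fin 3)

/-- Build a vector of ℝ³ from its coordinates. -/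
def mk3 (a b c : ℝ) : E3 := (WithLp.equiv 2 (Fin 3 → ℝ)).symm ![a, b, c]

/-- The cylindrical radius r = √(x₁² + x₂²). -/
def cylRad (x : E3) : ℝ := Real.sqrt ((x 0)^2 + (x 1)^2)

/-- The reflection (x₁, x₂, x₃) ↦ (x₁, x₂, −x₃). -/
def reflect3 (x : E3) : E3 := mk3 (x 0) (x 1) (-(x 2))

/-- The gradient of a function on the closed unit ball B̄₁ ⊂ ℝ³. -/
def gradB (f : E3 → ℝ) (x : E3) : E3 →L[ℝ] ℝ :=
  fderivWithin ℝ f (closedBall (0:E3) 1) x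

/-- Membership in the space X: C¹ on B̄₁, axisymmetric, even in x₃, vanishing at the
origin, and with finite norm ‖f‖_X = sup_{0<|x|≤1} |∇f(x)|/|x|. -/
def InX (f : E3 → ℝ) : Prop :=
  ContDiffOn ℝ 1 f (closedBall (0:E3) 1) ∧
  (∃ F : ℝ → ℝ → ℝ, ∀ x ∈ closedBall (0:E3) 1, f x = F (cylRad x) (x 2)) ∧
  (∀ x ∈ closedBall (0:E3) 1, f (reflect3 x) = f x) ∧
  f 0 = 0 ∧
  (∃ M : ℝ, ∀ x ∈ closedBall (0:E3) 1, ‖gradB f x‖ ≤ M * ‖x‖)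

/-- ‖f‖_X ≤ M, expressed pointwise: |∇f(x)| ≤ M|x| on B̄₁. -/
def XnormLe (f : E3 → ℝ) (M : ℝ) : Prop :=
  ∀ x ∈ closedBall (0:E3) 1, ‖gradB f x‖ ≤ M * ‖x‖

/-!
For `f ∈ X`, integrating `|∇f(x)| ≤ ‖f‖|x|` along rays from the origin gives
`|f(x)| ≤ ½‖f‖|x|²`. Hence `X` is a normed algebra: in `∇(fg) = f∇g + g∇f` each term is at most
`½‖f‖‖g‖|x|³`, so `‖fg‖ ≤ ‖f‖‖g‖`. Moreover `φ ↦ k ∘ φ - k 0` maps `X` to itself and is Lipschitz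
on `X_δ`: in `∇(k ∘ φ - k ∘ ψ) = k'(ψ)∇(φ - ψ) + (k'(φ) - k'(ψ))∇φ` the first term is controlled
by a bound on `k'` and the second by a bound on `k''`. The case `k = K'` is the one needed here.
-/

section NormedSpace

variable {𝕜 E : Type*} [NontriviallyNormedField 𝕜] [NormedAddCommGroup E] [NormedSpace 𝕜 E]
  {s : Set E} {x : E}

lemma norm_fderivWithin_smul_le {F : Type*} [NormedAddCommGroup F] [NormedSpace 𝕜 F] {u : E → 𝕜}
    {v : E → F} (hs : UniqueDiffWithinAt 𝕜 s x) (hu : DifferentiableWithinAt 𝕜 u s x)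
    (hv : DifferentiableWithinAt 𝕜 v s x) :
    ‖fderivWithin 𝕜 (fun y => u y • v y) s x‖ ≤
      ‖u x‖ * ‖fderivWithin 𝕜 v s x‖ + ‖fderivWithin 𝕜 u s x‖ * ‖v x‖ := by
  rw [fderivWithin_fun_smul hs hu hv]
  refine (norm_add_le _ _).trans_eq ?_
  rw [norm_smul, ContinuousLinearMap.norm_smulRight_apply]

lemma norm_fderivWithin_comp_sub_comp_le {g : 𝕜 → 𝕜} {φ ψ : E → 𝕜}
    (hs : UniqueDiffWithinAt 𝕜 s x) (hgφ : DifferentiableAt 𝕜 g (φ x))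
    (hgψ : DifferentiableAt 𝕜 g (ψ x)) (hφ : DifferentiableWithinAt 𝕜 φ s x)
    (hψ : DifferentiableWithinAt 𝕜 ψ s x) :
    ‖fderivWithin 𝕜 (fun y => g (φ y) - g (ψ y)) s x‖ ≤
      ‖deriv g (ψ x)‖ * ‖fderivWithin 𝕜 (fun y => φ y - ψ y) s x‖ +
        ‖deriv g (φ x) - deriv g (ψ x)‖ * ‖fderivWithin 𝕜 φ s x‖ := by
  have h_chain : HasFDerivWithinAt (fun y => g (φ y) - g (ψ y))
      (deriv g (φ x) • fderivWithin 𝕜 φ s x - deriv g (ψ x) • fderivWithin 𝕜 ψ s x) s x :=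
    (hgφ.hasDerivAt.comp_hasFDerivWithinAt x hφ.hasFDerivWithinAt).sub
      (hgψ.hasDerivAt.comp_hasFDerivWithinAt x hψ.hasFDerivWithinAt)
  have h_split : deriv g (φ x) • fderivWithin 𝕜 φ s x - deriv g (ψ x) • fderivWithin 𝕜 ψ s x =
      deriv g (ψ x) • (fderivWithin 𝕜 φ s x - fderivWithin 𝕜 ψ s x) +
        (deriv g (φ x) - deriv g (ψ x)) • fderivWithin 𝕜 φ s x := by
    module
  rw [h_chain.fderivWithin hs, fderivWithin_fun_sub hs hφ hψ, h_split, ← norm_smul, ← norm_smul]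
  exact norm_add_le _ _

end NormedSpace

lemma norm_sub_le_half_mul_sq_of_norm_fderivWithin_le {E F : Type*} [NormedAddCommGroup E]
    [NormedSpace ℝ E] [NormedAddCommGroup F] [NormedSpace ℝ F] {f : E → F} {s : Set E} {c x : E}
    {M : ℝ} (hs : StarConvex ℝ c s) (hf : DifferentiableOn ℝ f s)
    (hM : ∀ y ∈ s, ‖fderivWithin ℝ f s y‖ ≤ M * ‖y - c‖) (hx : x ∈ s) :
    ‖f x - f c‖ ≤ M / 2 * ‖x - c‖ ^ 2 := by
  let ray : ℝ → E := AffineMap.lineMap c x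
  have ray_mem : MapsTo ray (Icc 0 1) s := fun t ht =>
    starConvex_iff_segment_subset.1 hs hx (segment_eq_image_lineMap ℝ c x ▸ mem_image_of_mem _ ht)
  have h_deriv : ∀ t ∈ Icc (0 : ℝ) 1, HasDerivWithinAt (fun t => f (ray t) - f c)
      (fderivWithin ℝ f s (ray t) (x - c)) (Icc 0 1) t := fun t ht =>
    ((hf _ (ray_mem ht)).hasFDerivWithinAt.comp_hasDerivWithinAt t
      AffineMap.hasDerivWithinAt_lineMap ray_mem).sub_const _
  have h_majorant : ∀ t : ℝ, HasDerivAt (fun t => M / 2 * ‖x - c‖ ^ 2 * t ^ 2)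
      (M * ‖x - c‖ ^ 2 * t) t := fun t =>
    ((hasDerivAt_pow 2 t).const_mul _).congr_deriv (by push_cast; ring)
  have h_le : ∀ t ∈ Ico (0 : ℝ) 1,
      ‖fderivWithin ℝ f s (ray t) (x - c)‖ ≤ M * ‖x - c‖ ^ 2 * t := fun t ht => by
    have h_norm : ‖ray t - c‖ = t * ‖x - c‖ := by
      simp [ray, AffineMap.lineMap_apply, norm_smul, abs_of_nonneg ht.1]
    calc ‖fderivWithin ℝ f s (ray t) (x - c)‖
        ≤ M * ‖ray t - c‖ * ‖x - c‖ :=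
          ContinuousLinearMap.le_of_opNorm_le _ (hM _ (ray_mem (Ico_subset_Icc_self ht))) _
      _ = M * ‖x - c‖ ^ 2 * t := by rw [h_norm]; ring
  simpa [ray] using image_norm_le_of_norm_deriv_right_le_deriv_boundary
    (fun t ht => (h_deriv t ht).continuousWithinAt)
    (fun t ht => (h_deriv t (Ico_subset_Icc_self ht)).mono_of_mem_nhdsWithin
      (Icc_mem_nhdsGE_of_mem ht))
    (by simp [ray]) h_majorant h_le (right_mem_Icc.2 zero_le_one)

lemma uniqueDiffOn_closedBall {E : Type*} [NormedAddCommGroup E] [NormedSpace ℝ E] (c : E)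
    {r : ℝ} (hr : 0 < r) : UniqueDiffOn ℝ (closedBall c r) :=
  uniqueDiffOn_convex (convex_closedBall c r)
    ⟨c, ball_subset_interior_closedBall (mem_ball_self hr)⟩

lemma mul_sq_norm_le_self {E : Type*} [SeminormedAddCommGroup E] {a : ℝ} {x : E} (ha : 0 ≤ a)
    (hx : x ∈ closedBall 0 1) : a * ‖x‖ ^ 2 ≤ a :=
  mul_le_of_le_one_right ha (pow_le_one₀ (norm_nonneg x) (mem_closedBall_zero_iff.1 hx))

section

variable {f g : E3 → ℝ} {A B : ℝ}

lemma InX.differentiableOn (hf : InX f) : DifferentiableOn ℝ f (closedBall 0 1) :=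
  hf.1.differentiableOn one_ne_zero

lemma InX.apply_zero (hf : InX f) : f 0 = 0 := hf.2.2.2.1

lemma XnormLe.nonneg (hf : XnormLe f A) : 0 ≤ A := by
  obtain ⟨e, he⟩ := exists_norm_eq E3 zero_le_one
  simpa [he] using (norm_nonneg _).trans (hf e (by simp [he]))

lemma XnormLe.abs_apply_le (hA : XnormLe f A) (hf : InX f) {x : E3} (hx : x ∈ closedBall 0 1) :
    |f x| ≤ A / 2 * ‖x‖ ^ 2 := by
  simpa [hf.apply_zero] using norm_sub_le_half_mul_sq_of_norm_fderivWithin_le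
    ((convex_closedBall (0 : E3) 1).starConvex (mem_closedBall_self zero_le_one))
    hf.differentiableOn (fun y hy => by simpa [gradB] using hA y hy) hx

lemma XnormLe.apply_mem_Icc (hA : XnormLe f A) (hf : InX f) {x : E3} (hx : x ∈ closedBall 0 1) :
    f x ∈ Icc (-(A / 2)) (A / 2) :=
  abs_le.1 <| (hA.abs_apply_le hf hx).trans <|
    mul_sq_norm_le_self (div_nonneg hA.nonneg zero_le_two) hx

lemma XnormLe.sub (hA : XnormLe f A) (hB : XnormLe g B) (hf : InX f) (hg : InX g) :
    XnormLe (fun x => f x - g x) (A + B) := fun x hx => by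
  rw [gradB, fderivWithin_fun_sub (uniqueDiffOn_closedBall 0 one_pos x hx)
    (hf.differentiableOn x hx) (hg.differentiableOn x hx), add_mul]
  exact norm_sub_le_of_le (hA x hx) (hB x hx)

lemma XnormLe.sub_rev (h : XnormLe (fun x => f x - g x) A) :
    XnormLe (fun x => g x - f x) A := fun x hx => by
  have h_neg : (fun y => g y - f y) = -fun y => f y - g y := by
    ext y
    simp
  rw [gradB, h_neg, fderivWithin_neg (uniqueDiffOn_closedBall 0 one_pos x hx), norm_neg]
  exact h x hx

lemma XnormLe.mul (hA : XnormLe f A) (hB : XnormLe g B) (hf : InX f) (hg : InX g) :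
    XnormLe (fun x => f x * g x) (A * B) := fun x hx => by
  have hA₀ := hA.nonneg
  have hB₀ := hB.nonneg
  calc ‖gradB (fun y => f y * g y) x‖
      ≤ |f x| * ‖gradB g x‖ + ‖gradB f x‖ * |g x| :=
        norm_fderivWithin_smul_le (uniqueDiffOn_closedBall 0 one_pos x hx)
          (hf.differentiableOn x hx) (hg.differentiableOn x hx)
    _ ≤ A / 2 * ‖x‖ ^ 2 * (B * ‖x‖) + A * ‖x‖ * (B / 2 * ‖x‖ ^ 2) := by
        gcongr
        exacts [hA.abs_apply_le hf hx, hB x hx, hA x hx, hB.abs_apply_le hg hx]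
    _ = A * B * ‖x‖ * ‖x‖ ^ 2 := by ring
    _ ≤ A * B * ‖x‖ := mul_sq_norm_le_self (by positivity) hx

lemma InX.sub (hf : InX f) (hg : InX g) : InX (fun x => f x - g x) := by
  obtain ⟨hf_diff, ⟨F, hF⟩, hf_even, hf_zero, A, hA⟩ := id hf
  obtain ⟨hg_diff, ⟨G, hG⟩, hg_even, hg_zero, B, hB⟩ := id hg
  exact ⟨hf_diff.sub hg_diff,
    ⟨fun r z => F r z - G r z, fun x hx => by simp only [hF x hx, hG x hx]⟩,
    fun x hx => by simp only [hf_even x hx, hg_even x hx], by simp [hf_zero, hg_zero],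
    A + B, XnormLe.sub hA hB hf hg⟩

lemma InX.mul (hf : InX f) (hg : InX g) : InX (fun x => f x * g x) := by
  obtain ⟨hf_diff, ⟨F, hF⟩, hf_even, hf_zero, A, hA⟩ := id hf
  obtain ⟨hg_diff, ⟨G, hG⟩, hg_even, -, B, hB⟩ := id hg
  exact ⟨hf_diff.mul hg_diff,
    ⟨fun r z => F r z * G r z, fun x hx => by simp only [hF x hx, hG x hx]⟩,
    fun x hx => by simp only [hf_even x hx, hg_even x hx], by simp [hf_zero],
    A * B, XnormLe.mul hA hB hf hg⟩

variable {k : ℝ → ℝ} {φ ψ : E3 → ℝ} {δ d L₁ L₂ : ℝ}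

lemma InX.comp_sub_apply_zero (hk : ContDiff ℝ 1 k) (hφ : InX φ) :
    InX (fun x => k (φ x) - k 0) := by
  obtain ⟨hφ_diff, ⟨F, hF⟩, hφ_even, hφ_zero, A, hA⟩ := id hφ
  obtain ⟨L, hL⟩ := (isCompact_closedBall (0 : E3) 1).exists_bound_of_continuousOn
    (hk.continuous_deriv_one.comp_continuousOn hφ_diff.continuousOn)
  refine ⟨(hk.comp_contDiffOn hφ_diff).sub contDiffOn_const,
    ⟨fun r z => k (F r z) - k 0, fun x hx => by simp only [hF x hx]⟩,
    fun x hx => by simp only [hφ_even x hx], by simp [hφ_zero], L * A, fun x hx => ?_⟩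
  have h_chain : HasFDerivWithinAt (fun y => k (φ y) - k 0)
      (deriv k (φ x) • gradB φ x) (closedBall 0 1) x :=
    ((hk.differentiable one_ne_zero _).hasDerivAt.comp_hasFDerivWithinAt x
      (hφ.differentiableOn x hx).hasFDerivWithinAt).sub_const _
  rw [gradB, h_chain.fderivWithin (uniqueDiffOn_closedBall 0 one_pos x hx), norm_smul, mul_assoc]
  exact mul_le_mul (hL x hx) (hA x hx) (norm_nonneg _) ((norm_nonneg _).trans (hL x hx))

lemma InX.comp_sub_comp (hk : ContDiff ℝ 1 k) (hφ : InX φ) (hψ : InX ψ) :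
    InX (fun x => k (φ x) - k (ψ x)) := by
  simpa using (hφ.comp_sub_apply_zero hk).sub (hψ.comp_sub_apply_zero hk)

lemma XnormLe.comp_sub_comp (hk : Differentiable ℝ k) (hk' : Differentiable ℝ (deriv k))
    (hL₁ : ∀ t ∈ Icc (-(δ / 2)) (δ / 2), |deriv k t| ≤ L₁)
    (hL₂ : ∀ t ∈ Icc (-(δ / 2)) (δ / 2), |deriv (deriv k) t| ≤ L₂)
    (hφδ : XnormLe φ δ) (hψδ : XnormLe ψ δ) (hd : XnormLe (fun x => φ x - ψ x) d)
    (hφ : InX φ) (hψ : InX ψ) :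
    XnormLe (fun x => k (φ x) - k (ψ x)) ((L₁ + δ / 2 * L₂) * d) := fun x hx => by
  have hφ_mem := hφδ.apply_mem_Icc hφ hx
  have hψ_mem := hψδ.apply_mem_Icc hψ hx
  have hδ₀ := hφδ.nonneg
  have hd₀ := hd.nonneg
  have hL₁₀ : 0 ≤ L₁ := (abs_nonneg _).trans (hL₁ _ hψ_mem)
  have hL₂₀ : 0 ≤ L₂ := (abs_nonneg _).trans (hL₂ _ hψ_mem)
  have h_deriv_sub : |deriv k (φ x) - deriv k (ψ x)| ≤ L₂ * (d / 2 * ‖x‖ ^ 2) :=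
    ((convex_Icc _ _).norm_image_sub_le_of_norm_deriv_le (fun t _ => hk' t) hL₂ hψ_mem
      hφ_mem).trans (mul_le_mul_of_nonneg_left (hd.abs_apply_le (hφ.sub hψ) hx) hL₂₀)
  calc ‖gradB (fun y => k (φ y) - k (ψ y)) x‖
      ≤ |deriv k (ψ x)| * ‖gradB (fun y => φ y - ψ y) x‖ +
          |deriv k (φ x) - deriv k (ψ x)| * ‖gradB φ x‖ :=
        norm_fderivWithin_comp_sub_comp_le (uniqueDiffOn_closedBall 0 one_pos x hx) (hk _) (hk _)
          (hφ.differentiableOn x hx) (hψ.differentiableOn x hx)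
    _ ≤ L₁ * (d * ‖x‖) + L₂ * (d / 2 * ‖x‖ ^ 2) * (δ * ‖x‖) := by
        gcongr
        exacts [hL₁ _ hψ_mem, hd x hx, hφδ x hx]
    _ = L₁ * d * ‖x‖ + δ / 2 * L₂ * d * ‖x‖ * ‖x‖ ^ 2 := by ring
    _ ≤ L₁ * d * ‖x‖ + δ / 2 * L₂ * d * ‖x‖ :=
        add_le_add_right (mul_sq_norm_le_self (by positivity) hx) _
    _ = (L₁ + δ / 2 * L₂) * d * ‖x‖ := by ring

end

theorem Kprime_difference_product_estimate_general {k : ℝ → ℝ} (hk : ContDiff ℝ 2 k)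
    {δ L₁ L₂ : ℝ} (hL₁ : ∀ t ∈ Icc (-(δ / 2)) (δ / 2), |deriv k t| ≤ L₁)
    (hL₂ : ∀ t ∈ Icc (-(δ / 2)) (δ / 2), |deriv (deriv k) t| ≤ L₂)
    {φ₁ φ₂ η : E3 → ℝ} (hφ₁ : InX φ₁) (hδ₁ : XnormLe φ₁ δ) (hφ₂ : InX φ₂) (hδ₂ : XnormLe φ₂ δ)
    (hη : InX η) :
    InX (fun x => (k (φ₂ x) - k (φ₁ x)) * η x) ∧
      ∀ d N : ℝ, XnormLe (fun x => φ₁ x - φ₂ x) d → XnormLe η N →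
        XnormLe (fun x => (k (φ₂ x) - k (φ₁ x)) * η x) ((L₁ + δ / 2 * L₂) * d * N) := by
  have hk_sub : InX (fun x => k (φ₂ x) - k (φ₁ x)) :=
    hφ₂.comp_sub_comp (hk.of_le one_le_two) hφ₁
  refine ⟨hk_sub.mul hη, fun d N hd hN => ?_⟩
  have hk_norm : XnormLe (fun x => k (φ₂ x) - k (φ₁ x)) ((L₁ + δ / 2 * L₂) * d) :=
    XnormLe.comp_sub_comp (hk.differentiable two_ne_zero) hk.differentiable_deriv_two hL₁ hL₂
      hδ₂ hδ₁ hd.sub_rev hφ₂ hφ₁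
  exact hk_norm.mul hN hk_sub hη

/-- for δ > 0 sufficiently small, φ₁, φ₂ ∈ X_δ, η ∈ X, and K ∈ C³(ℝ),
the function x ↦ (K'(φ₂(x)) − K'(φ₁(x))) η(x) belongs to X, with
‖(K'(φ₂(·)) − K'(φ₁(·))) η(·)‖_X ≤ C ‖φ₁ − φ₂‖_X ‖η‖_X, where C depends only on δ and
on the bounds of K', K'', K''' on [−δ, δ]. -/
theorem Kprime_difference_product_estimate :
    ∃ δ₀ : ℝ, 0 < δ₀ ∧ ∀ δ : ℝ, 0 < δ → δ ≤ δ₀ →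
      ∀ M : ℝ, 0 ≤ M →
        ∃ C : ℝ, 0 < C ∧
          ∀ K : ℝ → ℝ, ContDiff ℝ 3 K →
            (∀ t : ℝ, |t| ≤ δ →
              |deriv K t| ≤ M ∧ |deriv (deriv K) t| ≤ M ∧ |deriv (deriv (deriv K)) t| ≤ M) →
            ∀ φ₁ φ₂ η : E3 → ℝ,
              InX φ₁ → XnormLe φ₁ δ → InX φ₂ → XnormLe φ₂ δ → InX η →
              (InX (fun x => (deriv K (φ₂ x) - deriv K (φ₁ x)) * η x) ∧
                ∀ d N : ℝ, XnormLe (fun x => φ₁ x - φ₂ x) d → XnormLe η N →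
                  XnormLe (fun x => (deriv K (φ₂ x) - deriv K (φ₁ x)) * η x) (C * d * N)) := by
  refine ⟨1, one_pos, fun δ hδ _ M hM => ⟨M + 1 + δ / 2 * (M + 1), by positivity,
    fun K hK hKM φ₁ φ₂ η hφ₁ hδ₁ hφ₂ hδ₂ hη => ?_⟩⟩
  have h_abs : ∀ t ∈ Icc (-(δ / 2)) (δ / 2), |t| ≤ δ := fun t ht => by
    linarith [abs_le.2 ht]
  exact Kprime_difference_product_estimate_general (ContDiff.deriv' (n := 2) hK)
    (fun t ht => by linarith [(hKM t (h_abs t ht)).2.1])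
    (fun t ht => by linarith [(hKM t (h_abs t ht)).2.2]) hφ₁ hδ₁ hφ₂ hδ₂ hη
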